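/- For every graph G in the family 𝒢_3, the quotient ring S/J_G is Cohen–Macaulay. -/

import Mathlib

open MvPolynomial

noncomputable section

/-- The binomial edge ideal of a simple graph `G` on vertex type `V`, inside the
polynomial ring `K[x_i, y_i : i ∈ V]`, modelled as `MvPolynomial (V ⊕ V) K`
with `x_i = X (Sum.inl i)` and `y_i = X (Sum.inr i)`. -/
def binomialEdgeIdeal (K : Type*) [Field K] {V : Type*} (G : SimpleGraph V) :
    Ideal (MvPolynomial (V ⊕ V) K) :=
  Ideal.span { f | ∃ i j : V, G.Adj i j ∧
    f = X (Sum.inl i) * X (Sum.inr j) - X (Sum.inl j) * X (Sum.inr i) }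

/-- The minimal number of generators of an ideal. -/
def mu {R : Type*} [CommRing R] (J : Ideal R) : ℕ :=
  sInf {k | ∃ s : Finset R, s.card = k ∧ Ideal.span (s : Set R) = J}

/-- The height of an ideal: the infimum of the heights of the primes containing it. -/
def htI {R : Type*} [CommRing R] (I : Ideal R) : ℕ∞ :=
  ⨅ (P : PrimeSpectrum R) (_ : I ≤ P.asIdeal), Order.height P

/-- An ideal is unmixed if all of its minimal primes have height equal to its height. -/
def IsUnmixed {R : Type*} [CommRing R] (I : Ideal R) : Prop :=
  ∀ P ∈ I.minimalPrimes, htI P = htI I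

/-- The depth of a ring `R` with respect to an ideal `m`: the supremum of the
lengths of regular sequences on `R` consisting of elements of `m`. -/
def ringDepth (R : Type*) [CommRing R] (m : Ideal R) : ℕ∞ :=
  sSup {d : ℕ∞ | ∃ l : List R, (l.length : ℕ∞) = d ∧ (∀ x ∈ l, x ∈ m) ∧
    RingTheory.Sequence.IsRegular R l}

/-- The graded maximal ideal of the quotient of a polynomial ring by an ideal `J`:
the image of the ideal generated by all the variables. -/
def gradedMaxQuot {K σ : Type*} [Field K] (J : Ideal (MvPolynomial σ K)) :
    Ideal (MvPolynomial σ K ⧸ J) :=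
  (Ideal.span (Set.range (X : σ → MvPolynomial σ K))).map (Ideal.Quotient.mk J)

/-- `S/J` is Cohen–Macaulay: its depth with respect to the graded maximal ideal
equals its Krull dimension. -/
def IsCMQuot {K σ : Type*} [Field K] (J : Ideal (MvPolynomial σ K)) : Prop :=
  (ringDepth (MvPolynomial σ K ⧸ J) (gradedMaxQuot J) : WithBot ℕ∞) =
    ringKrullDim (MvPolynomial σ K ⧸ J)

/-- A graph is a path graph if its vertices can be ordered `v_1, …, v_m` so that
its edges are exactly `{v_i, v_{i+1}}` for `1 ≤ i ≤ m - 1`. -/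
def IsPathGraph {V : Type*} (H : SimpleGraph V) : Prop :=
  ∃ (m : ℕ) (e : V ≃ Fin m), ∀ a b : V,
    H.Adj a b ↔ ((e a : ℕ) + 1 = (e b : ℕ) ∨ (e b : ℕ) + 1 = (e a : ℕ))

/-- The vertex set of a connected component, as a set of vertices. -/
def compSupp {V : Type*} (G : SimpleGraph V) (c : G.ConnectedComponent) : Set V :=
  {v | G.connectedComponentMk v = c}

end

noncomputable section

/-- The adjacency-generating relation of the graph in the family `𝒢₃` with path
lengths `r`, `s`, `t`: three paths `u_1—…—u_r`, `v_1—…—v_s`, `w_1—…—w_t` together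
with the triangle `u_1—v_1—w_1—u_1`. -/
def g3Rel (r s t : ℕ) : (Fin r ⊕ (Fin s ⊕ Fin t)) → (Fin r ⊕ (Fin s ⊕ Fin t)) → Prop
  | Sum.inl i, Sum.inl j => (i : ℕ) + 1 = (j : ℕ)
  | Sum.inr (Sum.inl i), Sum.inr (Sum.inl j) => (i : ℕ) + 1 = (j : ℕ)
  | Sum.inr (Sum.inr i), Sum.inr (Sum.inr j) => (i : ℕ) + 1 = (j : ℕ)
  | Sum.inl i, Sum.inr (Sum.inl j) => (i : ℕ) = 0 ∧ (j : ℕ) = 0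
  | Sum.inl i, Sum.inr (Sum.inr j) => (i : ℕ) = 0 ∧ (j : ℕ) = 0
  | Sum.inr (Sum.inl i), Sum.inr (Sum.inr j) => (i : ℕ) = 0 ∧ (j : ℕ) = 0
  | _, _ => False

/-- The member of the family `𝒢₃` with path lengths `r`, `s`, `t`. -/
def graphG3 (r s t : ℕ) : SimpleGraph (Fin r ⊕ (Fin s ⊕ Fin t)) :=
  SimpleGraph.fromRel (g3Rel r s t)

/-- The adjacency-generating relation of the graph in the family `𝒢₄` with path
lengths `r`, `s`: two paths `u_1—…—u_r` and `v_1—…—v_s` together with the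
edges `u_1—v_1` and `u_2—v_2`. -/
def g4Rel (r s : ℕ) : (Fin r ⊕ Fin s) → (Fin r ⊕ Fin s) → Prop
  | Sum.inl i, Sum.inl j => (i : ℕ) + 1 = (j : ℕ)
  | Sum.inr i, Sum.inr j => (i : ℕ) + 1 = (j : ℕ)
  | Sum.inl i, Sum.inr j => ((i : ℕ) = 0 ∧ (j : ℕ) = 0) ∨ ((i : ℕ) = 1 ∧ (j : ℕ) = 1)
  | _, _ => False

/-- The member of the family `𝒢₄` with path lengths `r`, `s`. -/
def graphG4 (r s : ℕ) : SimpleGraph (Fin r ⊕ Fin s) :=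
  SimpleGraph.fromRel (g4Rel r s)

/-!
For the triangle, `S/J_G` is the cubic algebra which Delone and Faddeev attach to the generic binary
cubic form. It is free of rank three over the polynomial ring in the four coefficients of the form,
hence Cohen–Macaulay of dimension four, and the coefficients form a regular sequence in every order.
Three of the coordinates on the space of cubic forms can be chosen so as to become linear forms in
`x_v`, `y_v` for the three vertices `v`.

The paths are then grown one leaf at a time. Let `q` be a leaf joined to the vertex `p` of `G`.
A substitution in `SL(2, K)`, applied at all vertices simultaneously, turns the linear form at `p`
into `x_p`. With `a = x_q` and `t = y_q - x_p` the quotient for the larger graph is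
`(S/J_G)[a, t] / (x_p (x_p + t) - y_p a)`. Replacing `x_p` by `a` and adding `t` produces a regular
sequence in every order in `(S/J_G)[a, t]`, modulo any part of which the relation, whose
constant coefficient is `x_p ^ 2`, is still regular; so it stays regular in the quotient. Its length
and the dimension both go up by one, and it contains the linear form `x_q` at the new leaf.
-/

section RegularModulo

variable {R : Type*} [CommRing R] {I : Ideal R}

lemma isSMulRegular_quotient_sup_span_singleton {z f : R} (hz : IsSMulRegular (R ⧸ I) z)
    (hf : IsSMulRegular (R ⧸ (I ⊔ Ideal.span {z})) f) :
    IsSMulRegular (R ⧸ (I ⊔ Ideal.span {f})) z := by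
  rw [isSMulRegular_quotient_iff_mem_of_smul_mem] at hz hf ⊢
  intro g hg
  obtain ⟨i, hi, c, hc, hzg⟩ := Submodule.mem_sup.1 hg
  obtain ⟨h, rfl⟩ := Ideal.mem_span_singleton'.1 hc
  have hh : h ∈ I ⊔ Ideal.span {z} := hf h <| Submodule.mem_sup.2
    ⟨-i, I.neg_mem hi, g * z, Ideal.mem_span_singleton'.2 ⟨g, rfl⟩, by
      linear_combination (norm := (simp only [smul_eq_mul]; ring)) -hzg⟩
  obtain ⟨j, hj, d, hd, hjd⟩ := Submodule.mem_sup.1 hh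
  obtain ⟨k, rfl⟩ := Ideal.mem_span_singleton'.1 hd
  have hgk : g - k * f ∈ I := by
    refine hz _ ?_
    convert I.add_mem hi (I.mul_mem_left f hj) using 1
    linear_combination (norm := (simp only [smul_eq_mul]; ring)) -hzg - f * hjd
  exact Submodule.mem_sup.2
    ⟨_, hgk, k * f, Ideal.mem_span_singleton'.2 ⟨k, rfl⟩, sub_add_cancel _ _⟩

open scoped Polynomial

lemma isSMulRegular_quotient_map_C {p : R[X]} (hp : IsSMulRegular (R ⧸ I) (p.coeff 0)) :
    IsSMulRegular (R[X] ⧸ I.map (Polynomial.C : R →+* R[X])) p := by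
  rw [isSMulRegular_quotient_iff_mem_of_smul_mem] at hp ⊢
  simp only [smul_eq_mul, Ideal.mem_map_C_iff] at hp ⊢
  intro q hq n
  induction n using Nat.strong_induction_on with
  | _ n ih =>
    refine hp _ ?_
    have hn := hq n
    rw [Polynomial.coeff_mul, ← Finset.add_sum_erase _ _ (a := (0, n)) (by simp)] at hn
    refine (I.add_mem_iff_left (I.sum_mem ?_)).1 hn
    rintro ⟨a, b⟩ hab
    have hb : b < n := by
      simp only [Finset.mem_erase, ne_eq, Prod.mk.injEq,
        Finset.HasAntidiagonal.mem_antidiagonal] at hab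
      omega
    exact I.mul_mem_left _ (ih b hb)

lemma isSMulRegular_quotient_map_C_X :
    IsSMulRegular (R[X] ⧸ I.map (Polynomial.C : R →+* R[X])) (Polynomial.X : R[X]) := by
  rw [isSMulRegular_quotient_iff_mem_of_smul_mem]
  simp only [smul_eq_mul, Ideal.mem_map_C_iff]
  exact fun q hq n ↦ Polynomial.coeff_X_mul q n ▸ hq (n + 1)

lemma mem_map_C_sup_span_X_iff {p : R[X]} :
    p ∈ I.map (Polynomial.C : R →+* R[X]) ⊔ Ideal.span {Polynomial.X} ↔ p.coeff 0 ∈ I := by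
  refine ⟨fun hp ↦ ?_, fun hp ↦ ?_⟩
  · obtain ⟨a, ha, b, hb, rfl⟩ := Submodule.mem_sup.1 hp
    obtain ⟨c, rfl⟩ := Ideal.mem_span_singleton'.1 hb
    simpa only [Polynomial.coeff_add, Polynomial.mul_coeff_zero, Polynomial.coeff_X_zero, mul_zero,
      add_zero] using Ideal.mem_map_C_iff.1 ha 0
  · rw [← Polynomial.divX_mul_X_add p]
    exact Ideal.add_mem _
      (Ideal.mem_sup_right (Ideal.mul_mem_left _ _ (Ideal.mem_span_singleton_self Polynomial.X)))
      (Ideal.mem_sup_left (Ideal.mem_map_of_mem Polynomial.C hp))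

lemma isSMulRegular_quotient_map_C_sup_span_X {p : R[X]}
    (hp : IsSMulRegular (R ⧸ I) (p.coeff 0)) :
    IsSMulRegular (R[X] ⧸ (I.map (Polynomial.C : R →+* R[X]) ⊔ Ideal.span {Polynomial.X})) p := by
  rw [isSMulRegular_quotient_iff_mem_of_smul_mem] at hp ⊢
  simp only [smul_eq_mul, mem_map_C_sup_span_X_iff, Polynomial.mul_coeff_zero] at hp ⊢
  exact fun q ↦ hp _

end RegularModulo

/-- A family of elements of a ring which forms a weakly regular sequence in every order. -/
def IsPermutableRegular {R ι : Type*} [CommRing R] (w : ι → R) : Prop :=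
  ∀ (T : Set ι), ∀ i ∉ T, IsSMulRegular (R ⧸ Ideal.span (w '' T)) (w i)

section PermutableRegular

open scoped Polynomial

variable {R ι : Type*} [CommRing R] {w : ι → R}

lemma isPermutableRegular_X (K σ : Type*) [Field K] :
    IsPermutableRegular (X : σ → MvPolynomial σ K) := by
  intro T i hi
  rw [isSMulRegular_quotient_iff_mem_of_smul_mem]
  intro g hg
  rw [smul_eq_mul, mul_comm, mem_ideal_span_X_image] at hg
  rw [mem_ideal_span_X_image]
  intro m hm
  obtain ⟨k, hk, hmk⟩ := hg (m + Finsupp.single i 1) <| by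
    rwa [mem_support_iff, coeff_mul_X, ← mem_support_iff]
  have hki : k ≠ i := fun h ↦ hi (h ▸ hk)
  exact ⟨k, hk, by simpa only [Finsupp.add_apply, Finsupp.single_eq_of_ne hki, add_zero] using hmk⟩

namespace IsPermutableRegular

lemma comp {κ : Type*} (hw : IsPermutableRegular w) {f : κ → ι} (hf : Function.Injective f) :
    IsPermutableRegular (w ∘ f) := by
  intro T i hi
  rw [Set.image_comp]
  exact hw _ _ fun h ↦ hi (hf.mem_set_image.1 h)

lemma mem_nonZeroDivisors (hw : IsPermutableRegular w) (i : ι) : w i ∈ nonZeroDivisors R := by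
  have hi := hw ∅ i (Set.notMem_empty i)
  rw [isSMulRegular_quotient_iff_mem_of_smul_mem] at hi
  rw [mem_nonZeroDivisors_iff]
  simpa [mul_comm] using hi

lemma algebraMap {A B : Type*} [CommRing A] [CommRing B] [Algebra A B] [Module.Flat A B]
    {w : ι → A} (hw : IsPermutableRegular w) :
    IsPermutableRegular (algebraMap A B ∘ w) := by
  intro T i hi
  rw [Set.image_comp, ← Ideal.map_span]
  refine (LinearEquiv.isSMulRegular_congr (Algebra.TensorProduct.quotIdealMapEquivTensorQuot B
    (Ideal.span (w '' T))).toLinearEquiv _).2 ?_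
  exact (hw T i hi).of_flat_of_isBaseChange (TensorProduct.isBaseChange A _ B)

lemma map_ringEquiv {R' : Type*} [CommRing R'] (hw : IsPermutableRegular w) (e : R ≃+* R') :
    IsPermutableRegular (e ∘ w) := by
  let _ : Algebra R R' := e.toRingHom.toAlgebra
  have : Module.Flat R R' :=
    Module.Flat.of_linearEquiv (AlgEquiv.ofRingEquiv (f := e) fun _ ↦ rfl).toLinearEquiv.symm
  exact hw.algebraMap

lemma quotient_mk {F : R} (hw : IsPermutableRegular w)
    (hF : ∀ T : Set ι, IsSMulRegular (R ⧸ Ideal.span (w '' T)) F) :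
    IsPermutableRegular (Ideal.Quotient.mk (Ideal.span {F}) ∘ w) := by
  intro T i hi
  have hwF : IsSMulRegular (R ⧸ (Ideal.span (w '' T) ⊔ Ideal.span {F})) (w i) := by
    refine isSMulRegular_quotient_sup_span_singleton (hw T i hi) ?_
    rw [← Ideal.span_union, ← Set.image_singleton, ← Set.image_union]
    exact hF _
  rw [Set.image_comp, ← Ideal.map_span, isSMulRegular_quotient_iff_mem_of_smul_mem]
  have hmem (h : R) : Ideal.Quotient.mk (Ideal.span {F}) h ∈
      (Ideal.span (w '' T)).map (Ideal.Quotient.mk (Ideal.span {F})) ↔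
      h ∈ Ideal.span (w '' T) ⊔ Ideal.span {F} := by
    rw [Ideal.mem_quotient_iff_mem_sup]
  intro g hg
  obtain ⟨g, rfl⟩ := Ideal.Quotient.mk_surjective g
  rw [Function.comp_apply, smul_eq_mul, ← map_mul, hmem] at hg
  exact (hmem g).2 (mem_of_isSMulRegular_quotient_of_smul_mem hwF hg)

lemma isRegular_map (hw : IsPermutableRegular w) {l : List ι} (hl : l.Nodup)
    (hne : Ideal.span (Set.range w) ≠ ⊤) : RingTheory.Sequence.IsRegular R (l.map w) := by
  refine ⟨⟨fun i hi ↦ ?_⟩, fun h ↦ hne ?_⟩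
  · have hspan : Ideal.ofList ((l.map w).take i) = Ideal.span (w '' {a | a ∈ l.take i}) := by
      rw [← List.map_take, Ideal.ofList]
      congr 1
      ext
      exact List.mem_map
    rw [List.length_map] at hi
    rw [hspan, smul_eq_mul, Ideal.mul_top, List.getElem_map]
    refine hw _ _ fun hmem ↦ ?_
    obtain ⟨j, hj, hji⟩ := List.mem_take_iff_getElem.1 hmem
    have := hl.getElem_inj_iff.1 hji
    omega
  · rw [eq_top_iff, h, smul_eq_mul, Ideal.mul_top, Ideal.ofList]
    refine Ideal.span_mono ?_
    rintro _ hx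
    obtain ⟨i, -, rfl⟩ := List.mem_map.1 hx
    exact ⟨i, rfl⟩

end IsPermutableRegular

/-- The family in `R[X]` consisting of a family in `R` together with the variable. -/
def adjoinVariable (w : ι → R) (o : Option ι) : R[X] :=
  o.elim Polynomial.X (Polynomial.C ∘ w)

lemma span_adjoinVariable_image_of_none_notMem (w : ι → R) {T : Set (Option ι)} (hT : none ∉ T) :
    Ideal.span (adjoinVariable w '' T) =
      (Ideal.span (w '' (some ⁻¹' T))).map (Polynomial.C : R →+* R[X]) := by
  have hT' : T = some '' (some ⁻¹' T) := by
    ext (_ | i) <;> simp [hT]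
  conv_lhs => rw [hT']
  rw [Ideal.map_span, Set.image_image, Set.image_image]
  rfl

lemma span_adjoinVariable_image_of_none_mem (w : ι → R) {T : Set (Option ι)} (hT : none ∈ T) :
    Ideal.span (adjoinVariable w '' T) =
      (Ideal.span (w '' (some ⁻¹' T))).map (Polynomial.C : R →+* R[X]) ⊔
        Ideal.span {Polynomial.X} := by
  have hT' : T = insert none (some '' (some ⁻¹' T)) := by
    ext (_ | i) <;> simp [hT]
  have hpre : some ⁻¹' (some '' (some ⁻¹' T)) = some ⁻¹' T :=
    Set.preimage_image_eq _ (Option.some_injective ι)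
  conv_lhs => rw [hT']
  rw [Set.image_insert_eq, Ideal.span_insert, sup_comm,
    span_adjoinVariable_image_of_none_notMem w (by simp), hpre]
  rfl

lemma isSMulRegular_adjoinVariable {T : Set (Option ι)} {p : R[X]}
    (hp : IsSMulRegular (R ⧸ Ideal.span (w '' (some ⁻¹' T))) (p.coeff 0)) :
    IsSMulRegular (R[X] ⧸ Ideal.span (adjoinVariable w '' T)) p := by
  by_cases hT : none ∈ T
  · rw [span_adjoinVariable_image_of_none_mem w hT]
    exact isSMulRegular_quotient_map_C_sup_span_X hp
  · rw [span_adjoinVariable_image_of_none_notMem w hT]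
    exact isSMulRegular_quotient_map_C hp

lemma IsPermutableRegular.adjoinVariable (hw : IsPermutableRegular w) :
    IsPermutableRegular (adjoinVariable w) := by
  rintro T (_ | i) hi
  · rw [span_adjoinVariable_image_of_none_notMem w hi]
    exact isSMulRegular_quotient_map_C_X
  · refine isSMulRegular_adjoinVariable ?_
    rw [_root_.adjoinVariable, Option.elim_some, Function.comp_apply, Polynomial.coeff_C_zero]
    exact hw _ i hi

variable [DecidableEq ι] {i₀ : ι}

lemma update_C_X_eq_adjoinVariable_comp (w : ι → R) (i₀ : ι) :
    Function.update (Polynomial.C ∘ w) i₀ Polynomial.X =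
      adjoinVariable w ∘ Function.update some i₀ none := by
  ext1 i
  obtain rfl | hi := eq_or_ne i i₀
  · simp [adjoinVariable]
  · simp [adjoinVariable, hi]

lemma IsPermutableRegular.update_C_X (hw : IsPermutableRegular w) (i₀ : ι) :
    IsPermutableRegular (Function.update (Polynomial.C ∘ w) i₀ Polynomial.X) := by
  rw [update_C_X_eq_adjoinVariable_comp]
  refine hw.adjoinVariable.comp fun i j hij ↦ ?_
  by_cases hi : i = i₀ <;> by_cases hj : j = i₀ <;> simp_all

lemma isSMulRegular_update_C_X {p : R[X]} {T : Set ι}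
    (hp : ∀ T' : Set ι, i₀ ∉ T' → IsSMulRegular (R ⧸ Ideal.span (w '' T')) (p.coeff 0)) :
    IsSMulRegular
      (R[X] ⧸ Ideal.span (Function.update (Polynomial.C ∘ w) i₀ Polynomial.X '' T)) p := by
  rw [update_C_X_eq_adjoinVariable_comp, Set.image_comp]
  refine isSMulRegular_adjoinVariable (hp _ ?_)
  rintro ⟨i, -, hi⟩
  by_cases h : i = i₀ <;> simp_all

end PermutableRegular

section WhiskerRelation

open scoped Polynomial

variable {R ι : Type*} [CommRing R]

/-- The relation `l * y = m * a` satisfied by the coordinates `a`, `y` of a new leaf, where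
`l`, `m` are the coordinates of its neighbour. It is written in terms of `a`, the inner variable of
`R[X][X]`, and of `t = y - l`, the outer one, which makes its constant coefficient `l ^ 2`. -/
def whiskerRelation (l m : R) : R[X][X] :=
  Polynomial.C (Polynomial.C l) * (Polynomial.C (Polynomial.C l) + Polynomial.X) -
    Polynomial.C (Polynomial.C m) * Polynomial.C Polynomial.X

lemma coeff_zero_coeff_zero_whiskerRelation (l m : R) :
    ((whiskerRelation l m).coeff 0).coeff 0 = l * l := by
  simp [whiskerRelation]

/-- The algebra obtained from `R` by adjoining two elements `a`, `t` with `l * (l + t) = m * a`. -/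
def WhiskerAlgebra (l m : R) : Type _ :=
  R[X][X] ⧸ Ideal.span {whiskerRelation l m}

namespace WhiskerAlgebra

variable (l m : R)

instance : CommRing (WhiskerAlgebra l m) := Ideal.Quotient.commRing _

instance {K : Type*} [CommSemiring K] [Algebra K R] : Algebra K (WhiskerAlgebra l m) :=
  Ideal.Quotient.algebra K

/-- The quotient map from `R[X][X]`. -/
def mk : R[X][X] →+* WhiskerAlgebra l m := Ideal.Quotient.mk _

/-- The adjoined element `a`. -/
def leafX : WhiskerAlgebra l m := mk l m (Polynomial.C Polynomial.X)

/-- The adjoined element `t`. -/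
def leafT : WhiskerAlgebra l m := mk l m Polynomial.X

variable (K : Type*) [CommSemiring K] [Algebra K R]

/-- The structure map. -/
def of : R →ₐ[K] WhiskerAlgebra l m :=
  (Ideal.Quotient.mkₐ K _).comp (Polynomial.CAlgHom.comp Polynomial.CAlgHom)

lemma of_apply (r : R) : of l m K r = mk l m (Polynomial.C (Polynomial.C r)) := rfl

lemma relation : of l m K l * (of l m K l + leafT l m) = of l m K m * leafX l m := by
  rw [← sub_eq_zero]
  exact Ideal.Quotient.eq_zero_iff_mem.2 (Ideal.mem_span_singleton_self _)

variable {l m K} {A : Type*} [CommRing A] [Algebra K A]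

/-- The universal property of `WhiskerAlgebra l m`. -/
def lift (f : R →ₐ[K] A) (a t : A) (h : f l * (f l + t) = f m * a) : WhiskerAlgebra l m →ₐ[K] A :=
  Ideal.Quotient.liftₐ _ (Polynomial.aevalTower (Polynomial.aevalTower f a) t) <| by
    change Ideal.span _ ≤ RingHom.ker _
    rw [Ideal.span_singleton_le_iff_mem]
    simp [whiskerRelation, h]

lemma algHom_ext {f g : WhiskerAlgebra l m →ₐ[K] A} (h : f.comp (of l m K) = g.comp (of l m K))
    (ha : f (leafX l m) = g (leafX l m)) (ht : f (leafT l m) = g (leafT l m)) : f = g :=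
  Ideal.Quotient.algHom_ext _ (Polynomial.algHom_ext' (Polynomial.algHom_ext' h ha) ht)

variable (f : R →ₐ[K] A) (a t : A) (h : f l * (f l + t) = f m * a)

@[simp]
lemma lift_of (r : R) : lift f a t h (of l m K r) = f r :=
  (Ideal.Quotient.lift_mk _ _ _).trans (by simp)

lemma lift_comp_of : (lift f a t h).comp (of l m K) = f :=
  AlgHom.ext (lift_of f a t h)

@[simp]
lemma lift_leafX : lift f a t h (leafX l m) = a :=
  (Ideal.Quotient.lift_mk _ _ _).trans (by simp)

@[simp]
lemma lift_leafT : lift f a t h (leafT l m) = t :=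
  (Ideal.Quotient.lift_mk _ _ _).trans (by simp)

end WhiskerAlgebra

lemma whiskerRelation_mem_nonZeroDivisors {l : R} (hl : l ∈ nonZeroDivisors R) (m : R) :
    whiskerRelation l m ∈ nonZeroDivisors R[X][X] := by
  refine Polynomial.mem_nonzeroDivisors_of_coeff_mem 0
    (Polynomial.mem_nonzeroDivisors_of_coeff_mem 0 ?_)
  rw [coeff_zero_coeff_zero_whiskerRelation]
  exact mul_mem hl hl

lemma ringKrullDim_whiskerAlgebra_le [IsNoetherianRing R] {l : R}
    (hl : l ∈ nonZeroDivisors R) (m : R) :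
    ringKrullDim (WhiskerAlgebra l m) ≤ ringKrullDim R + 1 := by
  have h := ringKrullDim_quotient_succ_le_of_nonZeroDivisor
    (whiskerRelation_mem_nonZeroDivisors hl m)
  rw [Polynomial.ringKrullDim_of_isNoetherianRing, Polynomial.ringKrullDim_of_isNoetherianRing] at h
  exact ENat.WithBot.add_le_add_one_right_iff.1 h

variable [DecidableEq ι] {w : ι → R}

/-- The family in `R[X][X]` in which the inner variable replaces the `i₀`-th element of a family in
`R` and the outer variable is added. -/
def whiskerParameter (w : ι → R) (i₀ : ι) : Option ι → R[X][X] :=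
  adjoinVariable (Function.update (Polynomial.C ∘ w) i₀ Polynomial.X)

lemma isSMulRegular_whiskerRelation (hw : IsPermutableRegular w) (i₀ : ι) (m : R)
    (T : Set (Option ι)) :
    IsSMulRegular (R[X][X] ⧸ Ideal.span (whiskerParameter w i₀ '' T))
      (whiskerRelation (w i₀) m) := by
  refine isSMulRegular_adjoinVariable (isSMulRegular_update_C_X fun T' hi₀ ↦ ?_)
  rw [coeff_zero_coeff_zero_whiskerRelation]
  exact (hw T' i₀ hi₀).mul (hw T' i₀ hi₀)

lemma IsPermutableRegular.whisker (hw : IsPermutableRegular w) (i₀ : ι) (m : R) :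
    IsPermutableRegular
      (WhiskerAlgebra.mk (w i₀) m ∘ whiskerParameter w i₀) :=
  (hw.update_C_X i₀).adjoinVariable.quotient_mk (isSMulRegular_whiskerRelation hw i₀ m)

end WhiskerRelation

section CohenMacaulayCriterion

lemma length_le_supportDim_of_isRegular {R M : Type*} [CommRing R] [IsNoetherianRing R]
    [AddCommGroup M] [Module R M] [Module.Finite R M] {rs : List R}
    (h : RingTheory.Sequence.IsRegular M rs) :
    (rs.length : WithBot ℕ∞) ≤ Module.supportDim R M := by
  induction rs generalizing M with
  | nil =>
    have := h.nontrivial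
    have : Nonempty (Module.support R M) := Module.nonempty_support_of_nontrivial.to_subtype
    exact Order.krullDim_nonneg
  | cons x xs ih =>
    rw [RingTheory.Sequence.isRegular_cons_iff] at h
    calc ((x :: xs).length : WithBot ℕ∞) = xs.length + 1 := by push_cast [List.length_cons]; rfl
      _ ≤ Module.supportDim R (QuotSMulTop x M) + 1 := by gcongr; exact ih h.2
      _ ≤ Module.supportDim R M :=
        Module.supportDim_quotSMulTop_succ_le_of_notMem_minimalPrimes
          fun _ ↦ h.1.notMem_of_mem_minimalPrimes

lemma length_le_ringKrullDim_of_isRegular {R : Type*} [CommRing R] [IsNoetherianRing R]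
    {rs : List R} (h : RingTheory.Sequence.IsRegular R rs) :
    (rs.length : WithBot ℕ∞) ≤ ringKrullDim R := by
  rw [← Module.supportDim_self_eq_ringKrullDim]
  exact length_le_supportDim_of_isRegular h

variable {K σ ι : Type*} [Field K] {J : Ideal (MvPolynomial σ K)}

lemma gradedMaxQuot_le_iff {I : Ideal (MvPolynomial σ K ⧸ J)} :
    gradedMaxQuot J ≤ I ↔ ∀ i, Ideal.Quotient.mk J (X i) ∈ I := by
  rw [gradedMaxQuot, Ideal.map_le_iff_le_comap, Ideal.span_le, Set.range_subset_iff]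
  rfl

lemma gradedMaxQuot_ne_top (hJ : J ≤ RingHom.ker (constantCoeff (σ := σ) (R := K))) :
    gradedMaxQuot J ≠ ⊤ := by
  let f : MvPolynomial σ K ⧸ J →+* K := Ideal.Quotient.lift J constantCoeff hJ
  have hle : gradedMaxQuot J ≤ RingHom.ker f := gradedMaxQuot_le_iff.2 fun i ↦
    (Ideal.Quotient.lift_mk J constantCoeff hJ).trans (constantCoeff_X K i)
  exact ne_top_of_le_ne_top (RingHom.ker_ne_top f) hle

/-- A permutable regular family of elements of the graded maximal ideal of `S/J` with at least as
many members as the Krull dimension of `S/J`. -/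
structure IsRegularParameterSystem [Fintype ι] (w : ι → MvPolynomial σ K ⧸ J) : Prop where
  isPermutableRegular : IsPermutableRegular w
  mem_gradedMaxQuot : ∀ i, w i ∈ gradedMaxQuot J
  ringKrullDim_le : ringKrullDim (MvPolynomial σ K ⧸ J) ≤ Fintype.card ι

lemma IsRegularParameterSystem.map_ringEquiv [Fintype ι] {w : ι → MvPolynomial σ K ⧸ J}
    (hw : IsRegularParameterSystem w) {τ : Type*} {J' : Ideal (MvPolynomial τ K)}
    (e : (MvPolynomial σ K ⧸ J) ≃+* (MvPolynomial τ K ⧸ J'))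
    (he : ∀ r ∈ gradedMaxQuot J, e r ∈ gradedMaxQuot J') : IsRegularParameterSystem (e ∘ w) where
  isPermutableRegular := hw.isPermutableRegular.map_ringEquiv e
  mem_gradedMaxQuot i := he _ (hw.mem_gradedMaxQuot i)
  ringKrullDim_le := (ringKrullDim_eq_of_ringEquiv e).symm.trans_le hw.ringKrullDim_le

lemma IsRegularParameterSystem.isCMQuot [Fintype ι] [Finite σ] {w : ι → MvPolynomial σ K ⧸ J}
    (hw : IsRegularParameterSystem w) (hJ : J ≤ RingHom.ker (constantCoeff (σ := σ) (R := K))) :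
    IsCMQuot J := by
  have hreg : RingTheory.Sequence.IsRegular (MvPolynomial σ K ⧸ J)
      (Finset.univ.toList.map w) := by
    refine hw.isPermutableRegular.isRegular_map (Finset.nodup_toList _)
      (ne_top_of_le_ne_top (gradedMaxQuot_ne_top hJ) (Ideal.span_le.2 ?_))
    rintro _ ⟨i, rfl⟩
    exact hw.mem_gradedMaxQuot i
  have hdim : ringKrullDim (MvPolynomial σ K ⧸ J) = Fintype.card ι :=
    le_antisymm hw.ringKrullDim_le (by simpa using length_le_ringKrullDim_of_isRegular hreg)
  have hdepth : ringDepth (MvPolynomial σ K ⧸ J) (gradedMaxQuot J) = Fintype.card ι := by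
    refine le_antisymm (sSup_le ?_) (le_sSup ⟨_, by simp, ?_, hreg⟩)
    · rintro _ ⟨l, rfl, -, hl⟩
      exact_mod_cast hdim ▸ length_le_ringKrullDim_of_isRegular hl
    · simpa using hw.mem_gradedMaxQuot
  rw [IsCMQuot, hdepth, hdim]
  rfl

end CohenMacaulayCriterion

section EdgeRing

/-- The quotient `S/J_G` of the polynomial ring by the binomial edge ideal of `G`. -/
abbrev EdgeRing (K : Type*) [Field K] {V : Type*} (G : SimpleGraph V) : Type _ :=
  MvPolynomial (V ⊕ V) K ⧸ binomialEdgeIdeal K G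

variable (K : Type*) [Field K] {V V' : Type*} (G : SimpleGraph V) {G' : SimpleGraph V'}

/-- The class of the variable `x_v` in `S/J_G`. -/
def edgeX (v : V) : EdgeRing K G := Ideal.Quotient.mk _ (X (Sum.inl v))

/-- The class of the variable `y_v` in `S/J_G`. -/
def edgeY (v : V) : EdgeRing K G := Ideal.Quotient.mk _ (X (Sum.inr v))

variable {K G}

lemma edgeX_mul_edgeY {i j : V} (h : G.Adj i j) :
    edgeX K G i * edgeY K G j = edgeX K G j * edgeY K G i := by
  rw [← sub_eq_zero]
  exact Ideal.Quotient.eq_zero_iff_mem.2 (Ideal.subset_span ⟨i, j, h, rfl⟩)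

section EdgeLift

variable {A : Type*} [CommRing A] [Algebra K A]

/-- The universal property of `S/J_G`: the algebra homomorphism with prescribed values
on the variables. -/
def edgeLift (x y : V → A) (h : ∀ i j, G.Adj i j → x i * y j = x j * y i) :
    EdgeRing K G →ₐ[K] A :=
  Ideal.Quotient.liftₐ (binomialEdgeIdeal K G) (aeval (Sum.elim x y)) <| by
    change binomialEdgeIdeal K G ≤ RingHom.ker (aeval (Sum.elim x y))
    refine Ideal.span_le.2 ?_
    rintro _ ⟨i, j, hij, rfl⟩
    simp [h i j hij]

variable {x y : V → A} (h : ∀ i j, G.Adj i j → x i * y j = x j * y i) (v : V)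

@[simp]
lemma edgeLift_edgeX : edgeLift (K := K) x y h (edgeX K G v) = x v :=
  (Ideal.Quotient.lift_mk _ _ _).trans (aeval_X _ _)

@[simp]
lemma edgeLift_edgeY : edgeLift (K := K) x y h (edgeY K G v) = y v :=
  (Ideal.Quotient.lift_mk _ _ _).trans (aeval_X _ _)

lemma edgeRing_algHom_ext {f g : EdgeRing K G →ₐ[K] A}
    (hx : ∀ v, f (edgeX K G v) = g (edgeX K G v))
    (hy : ∀ v, f (edgeY K G v) = g (edgeY K G v)) : f = g := by
  refine Ideal.Quotient.algHom_ext _ (MvPolynomial.algHom_ext ?_)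
  rintro (v | v)
  exacts [hx v, hy v]

end EdgeLift

lemma edgeX_mem_gradedMaxQuot (v : V) : edgeX K G v ∈ gradedMaxQuot (binomialEdgeIdeal K G) :=
  Ideal.mem_map_of_mem _ (Ideal.subset_span ⟨_, rfl⟩)

lemma edgeY_mem_gradedMaxQuot (v : V) : edgeY K G v ∈ gradedMaxQuot (binomialEdgeIdeal K G) :=
  Ideal.mem_map_of_mem _ (Ideal.subset_span ⟨_, rfl⟩)

lemma map_mem_gradedMaxQuot {f : EdgeRing K G →ₐ[K] EdgeRing K G'}
    (hx : ∀ v, f (edgeX K G v) ∈ gradedMaxQuot (binomialEdgeIdeal K G'))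
    (hy : ∀ v, f (edgeY K G v) ∈ gradedMaxQuot (binomialEdgeIdeal K G')) {r : EdgeRing K G}
    (hr : r ∈ gradedMaxQuot (binomialEdgeIdeal K G)) :
    f r ∈ gradedMaxQuot (binomialEdgeIdeal K G') := by
  have hle : gradedMaxQuot (binomialEdgeIdeal K G) ≤
      (gradedMaxQuot (binomialEdgeIdeal K G')).comap f :=
    gradedMaxQuot_le_iff.2 (Sum.rec hx hy)
  exact hle hr

lemma binomialEdgeIdeal_le_ker_constantCoeff :
    binomialEdgeIdeal K G ≤ RingHom.ker (constantCoeff (σ := V ⊕ V) (R := K)) := by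
  refine Ideal.span_le.2 ?_
  rintro _ ⟨i, j, -, rfl⟩
  simp

variable (K) in
/-- The functoriality of `S/J_G` in the graph `G`. -/
def edgeRingMap (f : G →g G') : EdgeRing K G →ₐ[K] EdgeRing K G' :=
  edgeLift (fun v ↦ edgeX K G' (f v)) (fun v ↦ edgeY K G' (f v))
    fun _ _ h ↦ edgeX_mul_edgeY (f.map_adj h)

@[simp]
lemma edgeRingMap_edgeX (f : G →g G') (v : V) :
    edgeRingMap K f (edgeX K G v) = edgeX K G' (f v) := edgeLift_edgeX _ v

@[simp]
lemma edgeRingMap_edgeY (f : G →g G') (v : V) :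
    edgeRingMap K f (edgeY K G v) = edgeY K G' (f v) := edgeLift_edgeY _ v

lemma edgeRingMap_mem_gradedMaxQuot (f : G →g G') {r : EdgeRing K G}
    (hr : r ∈ gradedMaxQuot (binomialEdgeIdeal K G)) :
    edgeRingMap K f r ∈ gradedMaxQuot (binomialEdgeIdeal K G') :=
  map_mem_gradedMaxQuot (fun v ↦ by simpa using edgeX_mem_gradedMaxQuot (f v))
    (fun v ↦ by simpa using edgeY_mem_gradedMaxQuot (f v)) hr

variable (K) in
/-- The isomorphism on `S/J_G` induced by an isomorphism of graphs. -/
def edgeRingEquiv (f : G ≃g G') : EdgeRing K G ≃ₐ[K] EdgeRing K G' :=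
  AlgEquiv.ofAlgHom (edgeRingMap K f.toHom) (edgeRingMap K f.symm.toHom)
    (edgeRing_algHom_ext (by simp) (by simp)) (edgeRing_algHom_ext (by simp) (by simp))

section EdgeTwist

open scoped MatrixGroups

lemma smul_add_smul_mul_smul_add_smul {A : Type*} [CommRing A] [Algebra K A] (a b c d : K)
    {x y x' y' : A} (h : x * y' = x' * y) :
    (a • x + b • y) * (c • x' + d • y') = (a • x' + b • y') * (c • x + d • y) := by
  simp only [Algebra.smul_def]
  linear_combination (algebraMap K A a * algebraMap K A d - algebraMap K A b * algebraMap K A c) * h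

/-- The action of a matrix `g` in `SL(2, K)` on `S/J_G` by the simultaneous linear substitutions
`x_v ↦ g₀₀ x_v + g₀₁ y_v` and `y_v ↦ g₁₀ x_v + g₁₁ y_v`. -/
def edgeTwist (g : SL(2, K)) : EdgeRing K G →ₐ[K] EdgeRing K G :=
  edgeLift (fun v ↦ g 0 0 • edgeX K G v + g 0 1 • edgeY K G v)
    (fun v ↦ g 1 0 • edgeX K G v + g 1 1 • edgeY K G v)
    fun _ _ h ↦ smul_add_smul_mul_smul_add_smul _ _ _ _ (edgeX_mul_edgeY h)

@[simp]
lemma edgeTwist_edgeX (g : SL(2, K)) (v : V) :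
    edgeTwist g (edgeX K G v) = g 0 0 • edgeX K G v + g 0 1 • edgeY K G v := edgeLift_edgeX _ v

@[simp]
lemma edgeTwist_edgeY (g : SL(2, K)) (v : V) :
    edgeTwist g (edgeY K G v) = g 1 0 • edgeX K G v + g 1 1 • edgeY K G v := edgeLift_edgeY _ v

lemma exists_edgeTwist_edgeX_eq {a b : K} (h : IsCoprime a b)
    (v : V) : ∃ g : SL(2, K), a • edgeX K G v + b • edgeY K G v = edgeTwist g (edgeX K G v) := by
  obtain ⟨g, rfl, rfl⟩ := h.exists_SL2_row 0
  exact ⟨g, (edgeTwist_edgeX g v).symm⟩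

lemma edgeTwist_one : edgeTwist (1 : SL(2, K)) = AlgHom.id K (EdgeRing K G) :=
  edgeRing_algHom_ext (by simp) (by simp)

lemma edgeTwist_comp (g h : SL(2, K)) :
    (edgeTwist h).comp (edgeTwist g) = edgeTwist (G := G) (g * h) := by
  refine edgeRing_algHom_ext (fun v ↦ ?_) (fun v ↦ ?_) <;>
  · simp only [AlgHom.comp_apply, edgeTwist_edgeX, edgeTwist_edgeY, map_add, map_smul,
      Matrix.SpecialLinearGroup.coe_mul, Matrix.mul_apply, Fin.sum_univ_two]
    module

/-- The action of a matrix in `SL(2, K)` on `S/J_G` as an automorphism. -/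
def edgeTwistEquiv (g : SL(2, K)) : EdgeRing K G ≃ₐ[K] EdgeRing K G :=
  AlgEquiv.ofAlgHom (edgeTwist g) (edgeTwist g⁻¹)
    (by rw [edgeTwist_comp, inv_mul_cancel, edgeTwist_one])
    (by rw [edgeTwist_comp, mul_inv_cancel, edgeTwist_one])

lemma edgeTwist_mem_gradedMaxQuot (g : SL(2, K)) {r : EdgeRing K G}
    (hr : r ∈ gradedMaxQuot (binomialEdgeIdeal K G)) :
    edgeTwist g r ∈ gradedMaxQuot (binomialEdgeIdeal K G) := by
  refine map_mem_gradedMaxQuot (fun v ↦ ?_) (fun v ↦ ?_) hr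
  · rw [edgeTwist_edgeX]
    exact add_mem (Submodule.smul_of_tower_mem _ _ (edgeX_mem_gradedMaxQuot v))
      (Submodule.smul_of_tower_mem _ _ (edgeY_mem_gradedMaxQuot v))
  · rw [edgeTwist_edgeY]
    exact add_mem (Submodule.smul_of_tower_mem _ _ (edgeX_mem_gradedMaxQuot v))
      (Submodule.smul_of_tower_mem _ _ (edgeY_mem_gradedMaxQuot v))

lemma edgeRingMap_edgeTwist_edgeX (f : G →g G') (g : SL(2, K)) (v : V) :
    edgeRingMap K f (edgeTwist g (edgeX K G v)) = edgeTwist g (edgeX K G' (f v)) := by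
  simp

end EdgeTwist

end EdgeRing

section Whisker

open scoped Polynomial

variable {K : Type*} [Field K] {V V' : Type*} {G : SimpleGraph V} {G' : SimpleGraph V'}

/-- The graph `G'` is obtained from its induced subgraph `G`, embedded by `e`, by joining a new
vertex `q` to the vertex `p` of `G` only. -/
structure IsWhisker (e : G ↪g G') (p : V) (q : V') : Prop where
  range_eq : Set.range e = {q}ᶜ
  adj_iff : ∀ v, G'.Adj (e v) q ↔ v = p

namespace IsWhisker

variable {e : G ↪g G'} {p : V} {q : V'} (h : IsWhisker e p q)

include h

lemma not_exists_apply_eq : ¬ ∃ v, e v = q := fun ⟨v, hv⟩ ↦ by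
  have hq : q ∈ Set.range e := ⟨v, hv⟩
  simp [h.range_eq] at hq

lemma eq_or_exists_apply_eq (v' : V') : v' = q ∨ ∃ v, e v = v' := by
  rw [or_iff_not_imp_left]
  exact fun hv ↦ h.range_eq.symm.subset hv

lemma algHom_ext {A : Type*} [CommRing A] [Algebra K A] {f g : EdgeRing K G' →ₐ[K] A}
    (he : f.comp (edgeRingMap K e.toHom) = g.comp (edgeRingMap K e.toHom))
    (hx : f (edgeX K G' q) = g (edgeX K G' q)) (hy : f (edgeY K G' q) = g (edgeY K G' q)) :
    f = g := by
  refine edgeRing_algHom_ext (fun v' ↦ ?_) (fun v' ↦ ?_) <;>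
  obtain rfl | ⟨v, rfl⟩ := h.eq_or_exists_apply_eq v'
  · exact hx
  · simpa using DFunLike.congr_fun he (edgeX K G v)
  · exact hy
  · simpa using DFunLike.congr_fun he (edgeY K G v)

lemma extend_mul_extend {A : Type*} [CommRing A] {x y : V → A} {a b : A}
    (hxy : ∀ i j, G.Adj i j → x i * y j = x j * y i) (hab : x p * b = a * y p) {i j : V'}
    (hij : G'.Adj i j) :
    Function.extend e x (fun _ ↦ a) i * Function.extend e y (fun _ ↦ b) j =
      Function.extend e x (fun _ ↦ a) j * Function.extend e y (fun _ ↦ b) i := by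
  obtain rfl | ⟨i, rfl⟩ := h.eq_or_exists_apply_eq i <;>
  obtain rfl | ⟨j, rfl⟩ := h.eq_or_exists_apply_eq j
  · rfl
  · rw [(h.adj_iff j).1 hij.symm]
    simp only [e.injective.extend_apply, Function.extend_apply' _ _ _ h.not_exists_apply_eq, hab]
  · rw [(h.adj_iff i).1 hij]
    simp only [e.injective.extend_apply, Function.extend_apply' _ _ _ h.not_exists_apply_eq, hab]
  · simp only [e.injective.extend_apply, hxy i j (e.map_adj_iff.1 hij)]

section Lift

variable {A : Type*} [CommRing A] [Algebra K A] (f : EdgeRing K G →ₐ[K] A) {a b : A}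
  (hab : f (edgeX K G p) * b = a * f (edgeY K G p))

/-- The extension to `S'/J_{G'}` of an algebra homomorphism on `S/J_G`, with prescribed values
`a`, `b` on `x_q`, `y_q`. -/
def lift : EdgeRing K G' →ₐ[K] A :=
  edgeLift (Function.extend e (fun v ↦ f (edgeX K G v)) fun _ ↦ a)
    (Function.extend e (fun v ↦ f (edgeY K G v)) fun _ ↦ b) fun _ _ ↦
      h.extend_mul_extend (fun i j hij ↦ by rw [← map_mul, edgeX_mul_edgeY hij, map_mul]) hab

lemma lift_comp_edgeRingMap : (h.lift f hab).comp (edgeRingMap K e.toHom) = f :=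
  edgeRing_algHom_ext (fun v ↦ by simp [lift, e.injective.extend_apply])
    fun v ↦ by simp [lift, e.injective.extend_apply]

lemma lift_edgeX_apply (v : V) : h.lift f hab (edgeX K G' (e v)) = f (edgeX K G v) := by
  rw [lift, edgeLift_edgeX, e.injective.extend_apply]

lemma lift_edgeX : h.lift f hab (edgeX K G' q) = a := by
  rw [lift, edgeLift_edgeX, Function.extend_apply' _ _ _ h.not_exists_apply_eq]

lemma lift_edgeY : h.lift f hab (edgeY K G' q) = b := by
  rw [lift, edgeLift_edgeY, Function.extend_apply' _ _ _ h.not_exists_apply_eq]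

end Lift

lemma edgeRingMap_relation :
    edgeRingMap K e.toHom (edgeX K G p) *
      (edgeRingMap K e.toHom (edgeX K G p) + (edgeY K G' q - edgeX K G' (e p))) =
    edgeRingMap K e.toHom (edgeY K G p) * edgeX K G' q := by
  have hpq := edgeX_mul_edgeY (K := K) ((h.adj_iff p).2 rfl)
  simp [hpq, mul_comm]

variable (K) in
/-- The presentation of `S'/J_{G'}` as the algebra generated over `S/J_G` by `a = x_q` and
`t = y_q - x_p`. -/
def whiskerAlgebraEquiv : WhiskerAlgebra (edgeX K G p) (edgeY K G p) ≃ₐ[K] EdgeRing K G' := by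
  refine AlgEquiv.ofAlgHom (WhiskerAlgebra.lift (edgeRingMap K e.toHom) _ _ h.edgeRingMap_relation)
    (h.lift (WhiskerAlgebra.of _ _ K) ((WhiskerAlgebra.relation _ _ K).trans (mul_comm _ _))) ?_ ?_
  · refine h.algHom_ext ?_ ?_ ?_
    · rw [AlgHom.comp_assoc, lift_comp_edgeRingMap, WhiskerAlgebra.lift_comp_of, AlgHom.id_comp]
    · simp [lift_edgeX]
    · simp [lift_edgeY]
  · refine WhiskerAlgebra.algHom_ext ?_ ?_ ?_
    · rw [AlgHom.comp_assoc, WhiskerAlgebra.lift_comp_of, lift_comp_edgeRingMap, AlgHom.id_comp]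
    · simp [lift_edgeX]
    · simp [lift_edgeX_apply, lift_edgeY]

lemma whiskerAlgebraEquiv_of (r : EdgeRing K G) :
    h.whiskerAlgebraEquiv K (WhiskerAlgebra.of _ _ K r) = edgeRingMap K e.toHom r :=
  WhiskerAlgebra.lift_of _ _ _ h.edgeRingMap_relation r

lemma whiskerAlgebraEquiv_leafX :
    h.whiskerAlgebraEquiv K (WhiskerAlgebra.leafX _ _) = edgeX K G' q :=
  WhiskerAlgebra.lift_leafX _ _ _ h.edgeRingMap_relation

lemma whiskerAlgebraEquiv_leafT :
    h.whiskerAlgebraEquiv K (WhiskerAlgebra.leafT _ _) = edgeY K G' q - edgeX K G' (e p) :=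
  WhiskerAlgebra.lift_leafT _ _ _ h.edgeRingMap_relation

end IsWhisker

/-- The family in `S'/J_{G'}` obtained from a family in `S/J_G` by replacing the `i₀`-th element,
meant to be `x_p`, by `x_q` and adding `y_q - x_p`. -/
def leafParameter {ι : Type*} [DecidableEq ι] (e : G ↪g G') (p : V) (q : V')
    (w : ι → EdgeRing K G) (i₀ : ι) (o : Option ι) : EdgeRing K G' :=
  o.elim (edgeY K G' q - edgeX K G' (e p))
    (Function.update (edgeRingMap K e.toHom ∘ w) i₀ (edgeX K G' q))

variable {e : G ↪g G'} {p : V} {q : V'} {ι : Type*} [DecidableEq ι] {w : ι → EdgeRing K G} {i₀ : ι}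

lemma IsWhisker.whiskerAlgebraEquiv_comp_whiskerParameter (h : IsWhisker e p q) :
    h.whiskerAlgebraEquiv K ∘ WhiskerAlgebra.mk _ _ ∘ whiskerParameter w i₀ =
      leafParameter e p q w i₀ := by
  ext1 (_ | i)
  · exact h.whiskerAlgebraEquiv_leafT
  · obtain rfl | hi := eq_or_ne i i₀
    · simpa [leafParameter, whiskerParameter, adjoinVariable, WhiskerAlgebra.leafX] using
        h.whiskerAlgebraEquiv_leafX (K := K)
    · simpa [leafParameter, whiskerParameter, adjoinVariable, WhiskerAlgebra.of_apply, hi] using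
        h.whiskerAlgebraEquiv_of (K := K) (w i)

lemma leafParameter_mem_gradedMaxQuot
    (hw : ∀ i, w i ∈ gradedMaxQuot (binomialEdgeIdeal K G)) (o : Option ι) :
    leafParameter e p q w i₀ o ∈ gradedMaxQuot (binomialEdgeIdeal K G') := by
  obtain _ | i := o
  · exact sub_mem (edgeY_mem_gradedMaxQuot q) (edgeX_mem_gradedMaxQuot _)
  · obtain rfl | hi := eq_or_ne i i₀
    · simpa [leafParameter] using edgeX_mem_gradedMaxQuot q
    · simpa [leafParameter, hi] using edgeRingMap_mem_gradedMaxQuot e.toHom (hw i)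

lemma IsRegularParameterSystem.leafParameter [Finite V] [Fintype ι]
    (hw : IsRegularParameterSystem w) (hi₀ : w i₀ = edgeX K G p) (h : IsWhisker e p q) :
    IsRegularParameterSystem (leafParameter e p q w i₀) where
  isPermutableRegular := by
    have hw' := hw.isPermutableRegular.whisker i₀ (edgeY K G p)
    rw [hi₀] at hw'
    rw [← h.whiskerAlgebraEquiv_comp_whiskerParameter]
    exact hw'.map_ringEquiv (h.whiskerAlgebraEquiv K).toRingEquiv
  mem_gradedMaxQuot := leafParameter_mem_gradedMaxQuot hw.mem_gradedMaxQuot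
  ringKrullDim_le := by
    have hl : edgeX K G p ∈ nonZeroDivisors (EdgeRing K G) :=
      hi₀ ▸ hw.isPermutableRegular.mem_nonZeroDivisors i₀
    rw [← ringKrullDim_eq_of_ringEquiv (h.whiskerAlgebraEquiv K).toRingEquiv]
    refine (ringKrullDim_whiskerAlgebra_le hl _).trans ?_
    rw [Fintype.card_option, Nat.cast_add, Nat.cast_one]
    gcongr
    exact hw.ringKrullDim_le

end Whisker

section TipParameters

open scoped MatrixGroups

variable {K : Type*} [Field K] {V V' κ : Type*} {G : SimpleGraph V} {G' : SimpleGraph V'}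

lemma IsRegularParameterSystem.edgeTwist {ι : Type*} [Fintype ι] {w : ι → EdgeRing K G}
    (hw : IsRegularParameterSystem w) (g : SL(2, K)) :
    IsRegularParameterSystem (edgeTwist g ∘ w) :=
  hw.map_ringEquiv (edgeTwistEquiv g).toRingEquiv fun _ ↦ edgeTwist_mem_gradedMaxQuot g

lemma IsRegularParameterSystem.edgeRingMap {ι : Type*} [Fintype ι] {w : ι → EdgeRing K G}
    (hw : IsRegularParameterSystem w) (f : G ≃g G') :
    IsRegularParameterSystem (edgeRingMap K f.toHom ∘ w) :=
  hw.map_ringEquiv (edgeRingEquiv K f).toRingEquiv fun _ ↦ edgeRingMap_mem_gradedMaxQuot f.toHom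

variable (K G) in
/-- `S/J_G` has a permutable regular system of parameters containing, for each index `k`, a linear
form in the two variables at the vertex `p k`; the linear form is given as an `SL(2, K)`-translate
of the variable `x_{p k}`, and distinct indices have distinct positions in the system. -/
def HasTipParameters (p : κ → V) : Prop :=
  ∃ (ι : Type) (_ : Fintype ι) (j : κ ↪ ι) (w : ι → EdgeRing K G), IsRegularParameterSystem w ∧
    ∀ k, ∃ g : SL(2, K), w (j k) = edgeTwist g (edgeX K G (p k))

namespace HasTipParameters

variable {p : κ → V}

lemma isCMQuot [Finite V] (h : HasTipParameters K G p) : IsCMQuot (binomialEdgeIdeal K G) := by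
  obtain ⟨ι, _, -, w, hw, -⟩ := h
  exact hw.isCMQuot binomialEdgeIdeal_le_ker_constantCoeff

lemma map_iso (h : HasTipParameters K G p) (f : G ≃g G') : HasTipParameters K G' (f ∘ p) := by
  obtain ⟨ι, _, j, w, hw, hj⟩ := h
  refine ⟨ι, _, j, edgeRingMap K f.toHom ∘ w, hw.edgeRingMap f, fun k ↦ ?_⟩
  obtain ⟨g, hg⟩ := hj k
  exact ⟨g, by rw [Function.comp_apply, hg]; exact edgeRingMap_edgeTwist_edgeX f.toHom g (p k)⟩

lemma exists_eq_edgeX (h : HasTipParameters K G p) (k₀ : κ) :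
    ∃ (ι : Type) (_ : Fintype ι) (j : κ ↪ ι) (w : ι → EdgeRing K G), IsRegularParameterSystem w ∧
      w (j k₀) = edgeX K G (p k₀) ∧
      ∀ k, ∃ g : SL(2, K), w (j k) = edgeTwist g (edgeX K G (p k)) := by
  obtain ⟨ι, _, j, w, hw, hj⟩ := h
  obtain ⟨g₀, hg₀⟩ := hj k₀
  refine ⟨ι, _, j, edgeTwist g₀⁻¹ ∘ w, hw.edgeTwist _, ?_, fun k ↦ ?_⟩
  · rw [Function.comp_apply, hg₀, ← AlgHom.comp_apply, edgeTwist_comp, mul_inv_cancel,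
      edgeTwist_one, AlgHom.id_apply]
  · obtain ⟨g, hg⟩ := hj k
    exact ⟨g * g₀⁻¹, by rw [Function.comp_apply, hg, ← AlgHom.comp_apply, edgeTwist_comp]⟩

lemma whisker [Finite V] [DecidableEq κ] (h : HasTipParameters K G p) {k₀ : κ} {e : G ↪g G'}
    {q : V'} (he : IsWhisker e (p k₀) q) :
    HasTipParameters K G' (Function.update (e ∘ p) k₀ q) := by
  classical
  obtain ⟨ι, _, j, w, hw, hk₀, hj⟩ := h.exists_eq_edgeX k₀
  refine ⟨Option ι, inferInstance, j.trans .some, leafParameter e (p k₀) q w (j k₀),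
    hw.leafParameter hk₀ he, fun k ↦ ?_⟩
  obtain rfl | hk := eq_or_ne k k₀
  · exact ⟨1, by simp [leafParameter, edgeTwist_one]⟩
  · obtain ⟨g, hg⟩ := hj k
    refine ⟨g, ?_⟩
    calc leafParameter e (p k₀) q w (j k₀) (some (j k)) = edgeRingMap K e.toHom (w (j k)) :=
          Function.update_of_ne (j.injective.ne hk) _ _
      _ = edgeTwist g (edgeX K G' (e (p k))) := by rw [hg]; exact edgeRingMap_edgeTwist_edgeX _ g _
      _ = _ := by rw [Function.update_of_ne hk, Function.comp_apply]

end HasTipParameters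

end TipParameters

/-- The cubic `A`-algebra with basis `1`, `ω`, `θ` attached by Delone and Faddeev to the binary
cubic form with coefficients `a`, `b`, `c`, `d`: its multiplication is given by `ω * θ = -a * d`,
`ω ^ 2 = -a * c + b * ω - a * θ` and `θ ^ 2 = -b * d + d * ω - c * θ`. -/
@[ext]
structure CubicAlgebra {A : Type*} (a b c d : A) where
  /-- The coefficient of `1`. -/
  c₀ : A
  /-- The coefficient of `ω`. -/
  c₁ : A
  /-- The coefficient of `θ`. -/
  c₂ : A

namespace CubicAlgebra

/-- The coordinates with respect to the basis `1`, `ω`, `θ`. -/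
def equivProd {A : Type*} (a b c d : A) : CubicAlgebra a b c d ≃ A × A × A where
  toFun x := (x.c₀, x.c₁, x.c₂)
  invFun v := ⟨v.1, v.2.1, v.2.2⟩

variable {A : Type*} [CommRing A] {a b c d : A}

instance : AddCommGroup (CubicAlgebra a b c d) := (equivProd a b c d).addCommGroup

section Module

variable {k : Type*} [Semiring k] [Module k A]

instance : Module k (CubicAlgebra a b c d) := (equivProd a b c d).module k

variable (r : k) (x : CubicAlgebra a b c d)

@[simp] lemma c₀_smul : (r • x).c₀ = r • x.c₀ := rfl
@[simp] lemma c₁_smul : (r • x).c₁ = r • x.c₁ := rfl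
@[simp] lemma c₂_smul : (r • x).c₂ = r • x.c₂ := rfl

end Module

instance : Module.Free A (CubicAlgebra a b c d) :=
  .of_equiv ((equivProd a b c d).linearEquiv A).symm

instance : Module.Finite A (CubicAlgebra a b c d) :=
  .equiv ((equivProd a b c d).linearEquiv A).symm

instance : Mul (CubicAlgebra a b c d) where
  mul x y :=
    { c₀ := x.c₀ * y.c₀ - a * c * (x.c₁ * y.c₁) - b * d * (x.c₂ * y.c₂) -
        a * d * (x.c₁ * y.c₂ + x.c₂ * y.c₁)
      c₁ := x.c₀ * y.c₁ + x.c₁ * y.c₀ + b * (x.c₁ * y.c₁) + d * (x.c₂ * y.c₂)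
      c₂ := x.c₀ * y.c₂ + x.c₂ * y.c₀ - a * (x.c₁ * y.c₁) - c * (x.c₂ * y.c₂) }

instance : One (CubicAlgebra a b c d) := ⟨⟨1, 0, 0⟩⟩

section Coefficients

variable (x y : CubicAlgebra a b c d)

@[simp] lemma c₀_zero : (0 : CubicAlgebra a b c d).c₀ = 0 := rfl
@[simp] lemma c₁_zero : (0 : CubicAlgebra a b c d).c₁ = 0 := rfl
@[simp] lemma c₂_zero : (0 : CubicAlgebra a b c d).c₂ = 0 := rfl

@[simp] lemma c₀_one : (1 : CubicAlgebra a b c d).c₀ = 1 := rfl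
@[simp] lemma c₁_one : (1 : CubicAlgebra a b c d).c₁ = 0 := rfl
@[simp] lemma c₂_one : (1 : CubicAlgebra a b c d).c₂ = 0 := rfl

@[simp] lemma c₀_add : (x + y).c₀ = x.c₀ + y.c₀ := rfl
@[simp] lemma c₁_add : (x + y).c₁ = x.c₁ + y.c₁ := rfl
@[simp] lemma c₂_add : (x + y).c₂ = x.c₂ + y.c₂ := rfl

@[simp] lemma c₀_neg : (-x).c₀ = -x.c₀ := rfl
@[simp] lemma c₁_neg : (-x).c₁ = -x.c₁ := rfl
@[simp] lemma c₂_neg : (-x).c₂ = -x.c₂ := rfl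

@[simp] lemma c₀_sub : (x - y).c₀ = x.c₀ - y.c₀ := rfl
@[simp] lemma c₁_sub : (x - y).c₁ = x.c₁ - y.c₁ := rfl
@[simp] lemma c₂_sub : (x - y).c₂ = x.c₂ - y.c₂ := rfl

@[simp] lemma c₀_mul : (x * y).c₀ = x.c₀ * y.c₀ - a * c * (x.c₁ * y.c₁) - b * d * (x.c₂ * y.c₂) -
    a * d * (x.c₁ * y.c₂ + x.c₂ * y.c₁) := rfl
@[simp] lemma c₁_mul : (x * y).c₁ =
    x.c₀ * y.c₁ + x.c₁ * y.c₀ + b * (x.c₁ * y.c₁) + d * (x.c₂ * y.c₂) := rfl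
@[simp] lemma c₂_mul : (x * y).c₂ =
    x.c₀ * y.c₂ + x.c₂ * y.c₀ - a * (x.c₁ * y.c₁) - c * (x.c₂ * y.c₂) := rfl

end Coefficients

instance : CommRing (CubicAlgebra a b c d) where
  __ := (inferInstance : AddCommGroup (CubicAlgebra a b c d))
  mul_assoc x y z := by ext <;> simp only [c₀_mul, c₁_mul, c₂_mul] <;> ring
  mul_comm x y := by ext <;> simp only [c₀_mul, c₁_mul, c₂_mul] <;> ring
  one_mul x := by ext <;> simp
  mul_one x := by ext <;> simp
  left_distrib x y z := by
    ext <;> simp only [c₀_mul, c₁_mul, c₂_mul, c₀_add, c₁_add, c₂_add] <;> ring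
  right_distrib x y z := by
    ext <;> simp only [c₀_mul, c₁_mul, c₂_mul, c₀_add, c₁_add, c₂_add] <;> ring
  zero_mul x := by ext <;> simp
  mul_zero x := by ext <;> simp

variable {k : Type*} [CommRing k] [Algebra k A]

instance : Algebra k (CubicAlgebra a b c d) :=
  .ofModule
    (fun r x y ↦ by
      ext <;> simp only [c₀_mul, c₁_mul, c₂_mul, c₀_smul, c₁_smul, c₂_smul, Algebra.smul_def] <;>
        ring)
    fun r x y ↦ by
      ext <;> simp only [c₀_mul, c₁_mul, c₂_mul, c₀_smul, c₁_smul, c₂_smul, Algebra.smul_def] <;>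
        ring

instance : IsScalarTower k A (CubicAlgebra a b c d) where
  smul_assoc r s x := by ext <;> simp

section AlgebraMap

variable (r : k)

@[simp] lemma c₀_algebraMap : (algebraMap k (CubicAlgebra a b c d) r).c₀ = algebraMap k A r := by
  simp [Algebra.algebraMap_eq_smul_one]

@[simp] lemma c₁_algebraMap : (algebraMap k (CubicAlgebra a b c d) r).c₁ = 0 := by
  simp [Algebra.algebraMap_eq_smul_one]

@[simp] lemma c₂_algebraMap : (algebraMap k (CubicAlgebra a b c d) r).c₂ = 0 := by
  simp [Algebra.algebraMap_eq_smul_one]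

end AlgebraMap

section Generators

variable (a b c d)

/-- The basis element `ω`. -/
def ω : CubicAlgebra a b c d := ⟨0, 1, 0⟩

/-- The basis element `θ`. -/
def θ : CubicAlgebra a b c d := ⟨0, 0, 1⟩

@[simp] lemma c₀_ω : (ω a b c d).c₀ = 0 := rfl
@[simp] lemma c₁_ω : (ω a b c d).c₁ = 1 := rfl
@[simp] lemma c₂_ω : (ω a b c d).c₂ = 0 := rfl

@[simp] lemma c₀_θ : (θ a b c d).c₀ = 0 := rfl
@[simp] lemma c₁_θ : (θ a b c d).c₁ = 0 := rfl
@[simp] lemma c₂_θ : (θ a b c d).c₂ = 1 := rfl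

variable {a b c d}

lemma eq_combination (x : CubicAlgebra a b c d) :
    x = algebraMap A _ x.c₀ + algebraMap A _ x.c₁ * ω a b c d +
      algebraMap A _ x.c₂ * θ a b c d := by
  ext <;> simp

end Generators

variable {B : Type*} [CommRing B] [Algebra k B]

lemma algHom_ext {f g : CubicAlgebra a b c d →ₐ[k] B}
    (h : f.comp (IsScalarTower.toAlgHom k A _) = g.comp (IsScalarTower.toAlgHom k A _))
    (hω : f (ω a b c d) = g (ω a b c d)) (hθ : f (θ a b c d) = g (θ a b c d)) : f = g := by
  have hA (r : A) : f (algebraMap A _ r) = g (algebraMap A _ r) := DFunLike.congr_fun h r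
  ext x
  rw [eq_combination x]
  simp only [map_add, map_mul, hA, hω, hθ]

/-- The algebra homomorphism extending `f` and mapping `ω` and `θ` to `y` and `z`. -/
def lift (f : A →ₐ[k] B) (y z : B) (hyz : y * z = -(f a * f d))
    (hy : y * y = -(f a * f c) + f b * y - f a * z)
    (hz : z * z = -(f b * f d) + f d * y - f c * z) : CubicAlgebra a b c d →ₐ[k] B where
  toFun x := f x.c₀ + f x.c₁ * y + f x.c₂ * z
  map_one' := by simp
  map_zero' := by simp
  map_add' u v := by
    simp only [c₀_add, c₁_add, c₂_add, map_add]
    ring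
  map_mul' u v := by
    simp only [c₀_mul, c₁_mul, c₂_mul, map_add, map_sub, map_mul]
    linear_combination -(f u.c₁ * f v.c₂ + f u.c₂ * f v.c₁) * hyz - f u.c₁ * f v.c₁ * hy -
      f u.c₂ * f v.c₂ * hz
  commutes' r := by simp

section Lift

variable (f : A →ₐ[k] B) (y z : B) (hyz : y * z = -(f a * f d))
  (hy : y * y = -(f a * f c) + f b * y - f a * z) (hz : z * z = -(f b * f d) + f d * y - f c * z)

@[simp]
lemma lift_algebraMap (r : A) : lift f y z hyz hy hz (algebraMap A _ r) = f r := by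
  change f _ + f _ * y + f _ * z = f r
  simp

@[simp]
lemma lift_ω : lift f y z hyz hy hz (ω a b c d) = y := by
  change f _ + f _ * y + f _ * z = y
  simp

@[simp]
lemma lift_θ : lift f y z hyz hy hz (θ a b c d) = z := by
  change f _ + f _ * y + f _ * z = z
  simp

end Lift

end CubicAlgebra

section Triangle

open scoped MatrixGroups

lemma ringKrullDim_le_of_isIntegral (A B : Type*) [CommRing A] [CommRing B] [Algebra A B]
    [Algebra.IsIntegral A B] : ringKrullDim B ≤ ringKrullDim A :=
  Order.krullDim_le_of_strictMono (PrimeSpectrum.comap (algebraMap A B)) fun P _ hPQ ↦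
    Ideal.IsIntegral.comap_lt_comap (I := P.asIdeal) hPQ

lemma forall_adj_top_fin_three {A : Type*} [CommRing A] {x y : Fin 3 → A}
    (h₀₁ : x 0 * y 1 = x 1 * y 0) (h₀₂ : x 0 * y 2 = x 2 * y 0) (h₁₂ : x 1 * y 2 = x 2 * y 1)
    (i j : Fin 3) : (⊤ : SimpleGraph (Fin 3)).Adj i j → x i * y j = x j * y i := by
  intro _
  fin_cases i <;> fin_cases j
  exacts [rfl, h₀₁, h₀₂, h₀₁.symm, rfl, h₁₂, h₀₂.symm, h₁₂.symm, rfl]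

variable (K : Type*) [Field K]

/-- The parameters `y₀`, `x₁ + y₁`, `x₂`, `x₀ - y₀ - y₁ - y₂` for the binomial edge ideal of the
triangle. -/
def triangleParameter : Fin 4 → EdgeRing K (⊤ : SimpleGraph (Fin 3)) :=
  ![edgeY K ⊤ 0, edgeX K ⊤ 1 + edgeY K ⊤ 1, edgeX K ⊤ 2,
    edgeX K ⊤ 0 - edgeY K ⊤ 0 - edgeY K ⊤ 1 - edgeY K ⊤ 2]

/-- The cubic algebra of the generic binary cubic form. The coordinates on the space of cubic forms
are `X 0 = a`, `X 2 = d`, `X 3 = b` and `X 1 = -(a + b + c + d)`, so that `X 0`, `X 1`, `X 2` become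
linear forms at the vertices `0`, `1`, `2` of the triangle. -/
abbrev TriangleAlgebra : Type _ :=
  CubicAlgebra (A := MvPolynomial (Fin 4) K) (X 0) (X 3) (-(X 0 + X 1 + X 2 + X 3)) (X 2)

/-- The homomorphism given on the coefficients by `triangleParameter`, mapping `ω` to `x₀` and `θ`
to `-y₂`. -/
def triangleAlgebraHom : TriangleAlgebra K →ₐ[K] EdgeRing K (⊤ : SimpleGraph (Fin 3)) := by
  have h₀₁ := edgeX_mul_edgeY (K := K) (G := (⊤ : SimpleGraph (Fin 3))) (i := 0) (j := 1) (by simp)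
  have h₀₂ := edgeX_mul_edgeY (K := K) (G := (⊤ : SimpleGraph (Fin 3))) (i := 0) (j := 2) (by simp)
  have h₁₂ := edgeX_mul_edgeY (K := K) (G := (⊤ : SimpleGraph (Fin 3))) (i := 1) (j := 2) (by simp)
  refine CubicAlgebra.lift (aeval (triangleParameter K)) (edgeX K ⊤ 0) (-edgeY K ⊤ 2) ?_ ?_ ?_ <;>
  simp only [triangleParameter, map_neg, map_add, aeval_X, Matrix.cons_val]
  · linear_combination -h₀₂
  · linear_combination h₀₁ + h₀₂
  · linear_combination h₀₂ + h₁₂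

/-- The scalar `X i` in `TriangleAlgebra K`. -/
def triangleScalar (i : Fin 4) : TriangleAlgebra K := algebraMap (MvPolynomial (Fin 4) K) _ (X i)

/-- The values of the variables `x₀`, `x₁`, `x₂` under the inverse of `triangleAlgebraHom`. -/
def triangleInvX : Fin 3 → TriangleAlgebra K :=
  ![CubicAlgebra.ω _ _ _ _, triangleScalar K 0 + triangleScalar K 1 + triangleScalar K 3 -
    CubicAlgebra.ω _ _ _ _ - CubicAlgebra.θ _ _ _ _, triangleScalar K 2]

/-- The values of the variables `y₀`, `y₁`, `y₂` under the inverse of `triangleAlgebraHom`. -/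
def triangleInvY : Fin 3 → TriangleAlgebra K :=
  ![triangleScalar K 0, CubicAlgebra.ω _ _ _ _ + CubicAlgebra.θ _ _ _ _ - triangleScalar K 0 -
    triangleScalar K 3, -CubicAlgebra.θ _ _ _ _]

lemma triangleInvX_mul_triangleInvY (i j : Fin 3) (hij : (⊤ : SimpleGraph (Fin 3)).Adj i j) :
    triangleInvX K i * triangleInvY K j = triangleInvX K j * triangleInvY K i := by
  refine forall_adj_top_fin_three ?_ ?_ ?_ i j hij <;>
  refine CubicAlgebra.ext ?_ ?_ ?_ <;>
  simp only [triangleInvX, triangleInvY, triangleScalar, Matrix.cons_val, CubicAlgebra.c₀_mul,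
    CubicAlgebra.c₁_mul, CubicAlgebra.c₂_mul, CubicAlgebra.c₀_add, CubicAlgebra.c₁_add,
    CubicAlgebra.c₂_add, CubicAlgebra.c₀_sub, CubicAlgebra.c₁_sub, CubicAlgebra.c₂_sub,
    CubicAlgebra.c₀_neg, CubicAlgebra.c₁_neg, CubicAlgebra.c₂_neg, CubicAlgebra.c₀_ω,
    CubicAlgebra.c₁_ω, CubicAlgebra.c₂_ω, CubicAlgebra.c₀_θ, CubicAlgebra.c₁_θ,
    CubicAlgebra.c₂_θ, CubicAlgebra.c₀_algebraMap, CubicAlgebra.c₁_algebraMap,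
    CubicAlgebra.c₂_algebraMap, Algebra.algebraMap_self, RingHom.id_apply] <;>
  ring

/-- The inverse of `triangleAlgebraHom`. -/
def triangleAlgebraInv : EdgeRing K (⊤ : SimpleGraph (Fin 3)) →ₐ[K] TriangleAlgebra K :=
  edgeLift (triangleInvX K) (triangleInvY K) (triangleInvX_mul_triangleInvY K)

lemma triangleAlgebraHom_triangleScalar (i : Fin 4) :
    triangleAlgebraHom K (triangleScalar K i) = triangleParameter K i := by
  rw [triangleAlgebraHom, triangleScalar, CubicAlgebra.lift_algebraMap, aeval_X]

lemma triangleAlgebraHom_ω : triangleAlgebraHom K (CubicAlgebra.ω _ _ _ _) = edgeX K ⊤ 0 := by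
  rw [triangleAlgebraHom, CubicAlgebra.lift_ω]

lemma triangleAlgebraHom_θ : triangleAlgebraHom K (CubicAlgebra.θ _ _ _ _) = -edgeY K ⊤ 2 := by
  rw [triangleAlgebraHom, CubicAlgebra.lift_θ]

lemma triangleAlgebraHom_triangleInvX (v : Fin 3) :
    triangleAlgebraHom K (triangleInvX K v) = edgeX K ⊤ v := by
  fin_cases v <;>
  simp only [triangleInvX, triangleParameter, map_add, map_sub, triangleAlgebraHom_triangleScalar,
    triangleAlgebraHom_ω, triangleAlgebraHom_θ, Fin.zero_eta, Fin.mk_one, Fin.reduceFinMk,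
    Matrix.cons_val]
  ring

lemma triangleAlgebraHom_triangleInvY (v : Fin 3) :
    triangleAlgebraHom K (triangleInvY K v) = edgeY K ⊤ v := by
  fin_cases v <;>
  simp only [triangleInvY, triangleParameter, map_add, map_sub, map_neg, neg_neg,
    triangleAlgebraHom_triangleScalar, triangleAlgebraHom_ω, triangleAlgebraHom_θ, Fin.zero_eta,
    Fin.mk_one, Fin.reduceFinMk, Matrix.cons_val]
  ring

lemma triangleAlgebraInv_triangleParameter (i : Fin 4) :
    triangleAlgebraInv K (triangleParameter K i) = triangleScalar K i := by
  fin_cases i <;>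
  simp only [triangleAlgebraInv, triangleParameter, triangleInvX, triangleInvY, map_add, map_sub,
    edgeLift_edgeX, edgeLift_edgeY, Fin.zero_eta, Fin.mk_one, Fin.reduceFinMk, Matrix.cons_val] <;>
  ring

/-- The identification of `S/J_G`, for the triangle `G`, with the cubic algebra
`TriangleAlgebra K`. -/
def triangleAlgebraEquiv : TriangleAlgebra K ≃ₐ[K] EdgeRing K (⊤ : SimpleGraph (Fin 3)) := by
  refine AlgEquiv.ofAlgHom (triangleAlgebraHom K) (triangleAlgebraInv K)
    (edgeRing_algHom_ext (fun v ↦ ?_) (fun v ↦ ?_))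
    (CubicAlgebra.algHom_ext (MvPolynomial.algHom_ext fun i ↦ ?_) ?_ ?_)
  · simp [triangleAlgebraInv, triangleAlgebraHom_triangleInvX]
  · simp [triangleAlgebraInv, triangleAlgebraHom_triangleInvY]
  · change triangleAlgebraInv K (triangleAlgebraHom K (triangleScalar K i)) = triangleScalar K i
    rw [triangleAlgebraHom_triangleScalar, triangleAlgebraInv_triangleParameter]
  · simp [triangleAlgebraHom_ω, triangleAlgebraInv, triangleInvX]
  · simp [triangleAlgebraHom_θ, triangleAlgebraInv, triangleInvY]

lemma triangleAlgebraEquiv_triangleScalar (i : Fin 4) :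
    triangleAlgebraEquiv K (triangleScalar K i) = triangleParameter K i :=
  triangleAlgebraHom_triangleScalar K i

lemma isRegularParameterSystem_triangleParameter :
    IsRegularParameterSystem (triangleParameter K) where
  isPermutableRegular := by
    rw [← funext (triangleAlgebraEquiv_triangleScalar K)]
    exact ((isPermutableRegular_X K (Fin 4)).algebraMap (B := TriangleAlgebra K)).map_ringEquiv
      (triangleAlgebraEquiv K).toRingEquiv
  mem_gradedMaxQuot i := by
    have hx := edgeX_mem_gradedMaxQuot (K := K) (G := (⊤ : SimpleGraph (Fin 3)))
    have hy := edgeY_mem_gradedMaxQuot (K := K) (G := (⊤ : SimpleGraph (Fin 3)))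
    fin_cases i
    exacts [hy 0, add_mem (hx 1) (hy 1), hx 2,
      sub_mem (sub_mem (sub_mem (hx 0) (hy 0)) (hy 1)) (hy 2)]
  ringKrullDim_le := by
    rw [← ringKrullDim_eq_of_ringEquiv (triangleAlgebraEquiv K).toRingEquiv]
    refine (ringKrullDim_le_of_isIntegral (MvPolynomial (Fin 4) K) _).trans ?_
    simp [MvPolynomial.ringKrullDim_of_isNoetherianRing]

lemma hasTipParameters_top_fin_three : HasTipParameters K (⊤ : SimpleGraph (Fin 3)) id := by
  refine ⟨Fin 4, inferInstance, Fin.castSuccEmb, triangleParameter K,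
    isRegularParameterSystem_triangleParameter K, fun k ↦ ?_⟩
  fin_cases k
  · simpa [triangleParameter] using
      exists_edgeTwist_edgeX_eq (K := K) (isCoprime_zero_left.2 isUnit_one) (0 : Fin 3)
  · simpa [triangleParameter] using
      exists_edgeTwist_edgeX_eq (isCoprime_one_left (x := (1 : K))) (1 : Fin 3)
  · simpa [triangleParameter] using
      exists_edgeTwist_edgeX_eq (isCoprime_one_left (x := (0 : K))) (2 : Fin 3)

end Triangle

section GraphFamily

/-- The end vertices of the three paths attached to the triangle. -/
def graphG3Tips (r s t : ℕ) : Fin 3 → Fin (r + 1) ⊕ (Fin (s + 1) ⊕ Fin (t + 1)) :=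
  ![Sum.inl (Fin.last r), Sum.inr (Sum.inl (Fin.last s)), Sum.inr (Sum.inr (Fin.last t))]

/-- The identification of the triangle with the smallest member of the family `𝒢₃`. -/
def topIsoGraphG3 : (⊤ : SimpleGraph (Fin 3)) ≃g graphG3 1 1 1 where
  toEquiv := Equiv.ofBijective (graphG3Tips 0 0 0) (by decide)
  map_rel_iff' := by
    intro i j
    fin_cases i <;> fin_cases j <;> simp [graphG3Tips, graphG3, g3Rel]

/-- The embedding of a member of the family `𝒢₃` into one with longer paths. -/
def graphG3Embedding {r s t r' s' t' : ℕ} (hr : r ≤ r') (hs : s ≤ s') (ht : t ≤ t') :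
    graphG3 r s t ↪g graphG3 r' s' t' where
  toFun := Sum.map (Fin.castLE hr) (Sum.map (Fin.castLE hs) (Fin.castLE ht))
  inj' := Sum.map_injective.2 ⟨Fin.castLE_injective hr,
    Sum.map_injective.2 ⟨Fin.castLE_injective hs, Fin.castLE_injective ht⟩⟩
  map_rel_iff' := by
    rintro (i | i | i) (j | j | j) <;> simp [graphG3, g3Rel]

lemma coe_graphG3Embedding {r s t r' s' t' : ℕ} (hr : r ≤ r') (hs : s ≤ s') (ht : t ≤ t') :
    ⇑(graphG3Embedding hr hs ht) =
      Sum.map (Fin.castLE hr) (Sum.map (Fin.castLE hs) (Fin.castLE ht)) := rfl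

lemma exists_castLE_eq_iff_ne_last {n : ℕ} {i : Fin (n + 1)} :
    (∃ j : Fin n, j.castLE n.le_succ = i) ↔ i ≠ Fin.last n :=
  Fin.exists_castSucc_eq

variable (r s t : ℕ)

lemma isWhisker_graphG3_left :
    IsWhisker (graphG3Embedding (r + 1).le_succ (s + 1).le_refl (t + 1).le_refl)
      (graphG3Tips r s t 0) (graphG3Tips (r + 1) s t 0) where
  range_eq := by
    rw [coe_graphG3Embedding]
    ext (i | i | i) <;> simp [graphG3Tips, exists_castLE_eq_iff_ne_last]
  adj_iff := by
    rw [coe_graphG3Embedding]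
    rintro (i | i | i)
    · simp only [graphG3, SimpleGraph.fromRel_adj, g3Rel, graphG3Tips, Matrix.cons_val, Sum.map_inl,
        ne_eq, Sum.inl.injEq, Fin.ext_iff, Fin.val_castLE, Fin.val_last]
      omega
    · simp [graphG3, g3Rel, graphG3Tips]
    · simp [graphG3, g3Rel, graphG3Tips]

lemma isWhisker_graphG3_middle :
    IsWhisker (graphG3Embedding (r + 1).le_refl (s + 1).le_succ (t + 1).le_refl)
      (graphG3Tips r s t 1) (graphG3Tips r (s + 1) t 1) where
  range_eq := by
    rw [coe_graphG3Embedding]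
    ext (i | i | i) <;> simp [graphG3Tips, exists_castLE_eq_iff_ne_last]
  adj_iff := by
    rw [coe_graphG3Embedding]
    rintro (i | i | i)
    · simp [graphG3, g3Rel, graphG3Tips]
    · simp only [graphG3, SimpleGraph.fromRel_adj, g3Rel, graphG3Tips, Matrix.cons_val, Sum.map_inl,
        Sum.map_inr, ne_eq, Sum.inl.injEq, Sum.inr.injEq, Fin.ext_iff, Fin.val_castLE, Fin.val_last]
      omega
    · simp [graphG3, g3Rel, graphG3Tips]

lemma isWhisker_graphG3_right :
    IsWhisker (graphG3Embedding (r + 1).le_refl (s + 1).le_refl (t + 1).le_succ)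
      (graphG3Tips r s t 2) (graphG3Tips r s (t + 1) 2) where
  range_eq := by
    rw [coe_graphG3Embedding]
    ext (i | i | i) <;> simp [graphG3Tips, exists_castLE_eq_iff_ne_last]
  adj_iff := by
    rw [coe_graphG3Embedding]
    rintro (i | i | i)
    · simp [graphG3, g3Rel, graphG3Tips]
    · simp [graphG3, g3Rel, graphG3Tips]
    · simp only [graphG3, SimpleGraph.fromRel_adj, g3Rel, graphG3Tips, Matrix.cons_val, Sum.map_inr,
        ne_eq, Sum.inr.injEq, Fin.ext_iff, Fin.val_castLE, Fin.val_last]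
      omega

lemma hasTipParameters_graphG3 (K : Type*) [Field K] :
    HasTipParameters K (graphG3 (r + 1) (s + 1) (t + 1)) (graphG3Tips r s t) := by
  induction r with
  | succ r ih =>
    convert ih.whisker (isWhisker_graphG3_left r s t) using 1
    ext1 k
    fin_cases k <;> rfl
  | zero =>
    induction s with
    | succ s ih =>
      convert ih.whisker (isWhisker_graphG3_middle 0 s t) using 1
      ext1 k
      fin_cases k <;> rfl
    | zero =>
      induction t with
      | succ t ih =>
        convert ih.whisker (isWhisker_graphG3_right 0 0 t) using 1
        ext1 k
        fin_cases k <;> rfl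
      | zero => exact (hasTipParameters_top_fin_three K).map_iso topIsoGraphG3

end GraphFamily

/-- For every graph `G` in the family `𝒢₃` (three paths of lengths
`r, s, t ≥ 1` attached to a triangle), the quotient `S/J_G` is Cohen–Macaulay. -/
theorem isCMQuot_binomialEdgeIdeal_graphG3
    (K : Type*) [Field K] (r s t : ℕ) (hr : 1 ≤ r) (hs : 1 ≤ s) (ht : 1 ≤ t) :
    IsCMQuot (binomialEdgeIdeal K (graphG3 r s t)) := by
  obtain ⟨r, rfl⟩ := Nat.exists_eq_add_of_le' hr
  obtain ⟨s, rfl⟩ := Nat.exists_eq_add_of_le' hs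
  obtain ⟨t, rfl⟩ := Nat.exists_eq_add_of_le' ht
  exact (hasTipParameters_graphG3 r s t K).isCMQuot

end
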